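/- Let T > 0, ω = 2π/T, N ∈ ℕ, and let a₀,…,a_N be complex numbers with a₀ = 0. Define p(t) = Re(∑_{k=0}^{N} a_k e^{ι k ω t}). Then for every integer m with 1 ≤ m ≤ N, (1/T) ∫₀^T (d²/dt²)(p(t)²) e^{−ι m ω t} dt = −(m² ω²/4) ( ∑_{k=1}^{m} a_k a_{m−k} + 2 ∑_{l=0}^{N−m} conj(a_l) a_{l+m} ). -/

import Mathlib

open Finset Complex

theorem aux_deriv (q : ℝ → ℝ) (t : ℝ) (D : ℂ)
    (h : HasDerivAt (fun t : ℝ => (q t : ℂ)) D t) : ((deriv q t : ℝ) : ℂ) = D := by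
  have h1 : HasDerivAt q D.re t := by
    have := Complex.reCLM.hasFDerivAt.comp_hasDerivAt t h
    simpa [Function.comp_def] using this
  rw [h1.deriv]
  exact h1.ofReal_comp.unique h

theorem aux_exp_deriv (z : ℂ) (t : ℝ) :
    HasDerivAt (fun t : ℝ => Complex.exp (z * t)) (z * Complex.exp (z * t)) t := by
  have h : HasDerivAt (fun t : ℝ => z * (t : ℂ)) z t := by
    simpa using (Complex.ofRealCLM.hasDerivAt (x := t)).const_mul z
  simpa [mul_comm] using h.cexp

theorem aux_sum_deriv {ι : Type} (s : Finset ι) (c z : ι → ℂ) (q : ℝ → ℝ)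
    (hq : ∀ t : ℝ, (q t : ℂ) = ∑ i ∈ s, c i * Complex.exp (z i * t)) (t : ℝ) :
    ((deriv q t : ℝ) : ℂ) = ∑ i ∈ s, (c i * z i) * Complex.exp (z i * t) := by
  apply aux_deriv
  rw [funext hq]
  have := HasDerivAt.fun_sum (u := s) (x := t) (fun i _ => (aux_exp_deriv (z i) t).const_mul (c i))
  simpa [mul_assoc] using this

theorem aux_int (T : ℝ) (hT : 0 < T) (ω : ℝ) (hω : ω = 2 * Real.pi / T) (n : ℤ) :
    ∫ t in (0 : ℝ)..T, Complex.exp ((Complex.I * n * ω) * t) = if n = 0 then (T : ℂ) else 0 := by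
  split_ifs with h
  · simp [h]
  · have hT' : (T : ℂ) ≠ 0 := by exact_mod_cast hT.ne'
    have hz : Complex.I * n * ω ≠ 0 := by
      have : (ω : ℂ) ≠ 0 := by
        have : ω ≠ 0 := by rw [hω]; positivity
        exact_mod_cast this
      have hn : (n : ℂ) ≠ 0 := by exact_mod_cast h
      simp [this, hn]
    rw [integral_exp_mul_complex hz]
    have : Complex.I * n * ω * T = n * (2 * Real.pi * Complex.I) := by
      rw [hω]; push_cast; field_simp
    rw [this, Complex.exp_int_mul_two_pi_mul_I]
    simp

theorem aux_main {ι : Type} (T : ℝ) (hT : 0 < T) (ω : ℝ) (hω : ω = 2 * Real.pi / T)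
    (s : Finset ι) (c : ι → ℂ) (n : ι → ℤ) (q : ℝ → ℝ)
    (hq : ∀ t : ℝ, (q t : ℂ) = ∑ i ∈ s, c i * Complex.exp ((Complex.I * n i * ω) * t)) (m : ℕ) :
    (1 / (T : ℂ)) * ∫ t in (0 : ℝ)..T, ((deriv (deriv q) t : ℝ) : ℂ) *
            Complex.exp (-Complex.I * m * ω * t) =
      -((m : ℂ) ^ 2 * (ω : ℂ) ^ 2) * ∑ i ∈ s, if n i = m then c i else 0 := by
  have hT' : (T : ℂ) ≠ 0 := by exact_mod_cast hT.ne'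
  have h2 := aux_sum_deriv s _ _ _ (aux_sum_deriv s _ _ q hq)
  have h3 : ∀ t : ℝ, ((deriv (deriv q) t : ℝ) : ℂ) * Complex.exp (-Complex.I * m * ω * t)
      = ∑ i ∈ s, (c i * (Complex.I * n i * ω) * (Complex.I * n i * ω)) *
        Complex.exp ((Complex.I * ((n i - m : ℤ) : ℂ) * ω) * t) := by
    intro t
    rw [h2, Finset.sum_mul]
    refine Finset.sum_congr rfl fun i _ => ?_
    rw [mul_assoc, ← Complex.exp_add]
    congr 2
    push_cast; ring
  simp_rw [h3]
  rw [intervalIntegral.integral_finsetSum]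
  · rw [Finset.mul_sum, Finset.mul_sum]
    refine Finset.sum_congr rfl fun i _ => ?_
    rw [intervalIntegral.integral_const_mul, aux_int T hT ω hω]
    by_cases h : n i = m
    · simp only [h, sub_self, if_true]
      field_simp
      push_cast
      rw [Complex.I_sq]
      ring
    · have h' : n i - m ≠ 0 := sub_ne_zero.mpr h
      simp [h, h']
  · intro i _
    exact (by fun_prop : Continuous _).intervalIntegrable _ _

theorem aux_conv (N m : ℕ) (hm : m ≤ N) (a : ℕ → ℂ) (ha0 : a 0 = 0) :
    ∑ j ∈ range (N + 1), ∑ k ∈ range (N + 1), (if j + k = m then a j * a k else 0)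
      = ∑ k ∈ Finset.Icc 1 m, a k * a (m - k) := by
  have h1 : ∀ j, ∑ k ∈ range (N + 1), (if j + k = m then a j * a k else 0)
      = if j ∈ Finset.Icc 1 m then a j * a (m - j) else 0 := by
    intro j
    by_cases hj : j ≤ m
    · rw [Finset.sum_eq_single (m - j)]
      · rcases Nat.eq_zero_or_pos j with rfl | h
        · simp [ha0]
        · rw [if_pos (by omega), if_pos (by simp; omega)]
      · intro b _ hb
        rw [if_neg (by omega)]
      · intro h
        simp at h
        omega
    · rw [if_neg (by simp; omega)]
      exact Finset.sum_eq_zero fun k _ => if_neg (by omega)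
  simp_rw [h1]
  rw [← Finset.sum_filter]
  refine Finset.sum_congr ?_ fun _ _ => rfl
  ext j
  simp
  omega

theorem aux_corr (N m : ℕ) (hm : m ≤ N) (a : ℕ → ℂ) :
    ∑ j ∈ range (N + 1), ∑ k ∈ range (N + 1),
      (if k = j + m then (starRingEnd ℂ) (a j) * a k else 0)
      = ∑ l ∈ range (N - m + 1), (starRingEnd ℂ) (a l) * a (l + m) := by
  have h1 : ∀ j, ∑ k ∈ range (N + 1), (if k = j + m then (starRingEnd ℂ) (a j) * a k else 0)
      = if j ∈ range (N - m + 1) then (starRingEnd ℂ) (a j) * a (j + m) else 0 := by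
    intro j
    rw [Finset.sum_ite_eq']
    refine if_congr ?_ rfl rfl
    simp; omega
  simp_rw [h1]
  rw [← Finset.sum_filter]
  refine Finset.sum_congr ?_ fun _ _ => rfl
  ext j
  simp
  omega

/-- Fourier coefficients of the projected second time derivative of the
square of a truncated harmonic expansion `p` (with vanishing mean, `a₀ = 0`):
for `1 ≤ m ≤ N`,
`(1/T) ∫₀^T (p²)'' e^{−ι m ω t} dt
  = −(m² ω²/4)(∑_{k=1}^m a_k a_{m−k} + 2 ∑_{l=0}^{N−m} conj(a_l) a_{l+m})`. -/
theorem stmt_12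
    (T : ℝ) (hT : 0 < T) (ω : ℝ) (hω : ω = 2 * Real.pi / T)
    (N : ℕ) (a : ℕ → ℂ) (ha0 : a 0 = 0)
    (p : ℝ → ℝ)
    (hp : ∀ t : ℝ, p t =
      (∑ k ∈ range (N + 1), a k * Complex.exp (Complex.I * k * ω * t)).re) :
    ∀ m : ℕ, 1 ≤ m → m ≤ N →
      (1 / (T : ℂ)) * ∫ t in (0 : ℝ)..T,
          ((deriv (deriv (fun s : ℝ => p s ^ 2)) t : ℝ) : ℂ) *
            Complex.exp (-Complex.I * m * ω * t) =
        -(((m : ℂ) ^ 2 * (ω : ℂ) ^ 2) / 4) *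
          ((∑ k ∈ Finset.Icc 1 m, a k * a (m - k)) +
            2 * ∑ l ∈ range (N - m + 1), (starRingEnd ℂ) (a l) * a (l + m)) := by
  intro m hm1 hmN
  let S : Finset (ℕ × Bool) := range (N + 1) ×ˢ Finset.univ
  let c : ℕ × Bool → ℂ := fun x => if x.2 then a x.1 / 2 else (starRingEnd ℂ) (a x.1) / 2
  let n : ℕ × Bool → ℤ := fun x => if x.2 then (x.1 : ℤ) else -(x.1 : ℤ)
  have hpS : ∀ t : ℝ, (p t : ℂ) = ∑ x ∈ S, c x * Complex.exp ((Complex.I * n x * ω) * t) := by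
    intro t
    rw [hp, Complex.re_eq_add_conj, map_sum, ← Finset.sum_add_distrib, Finset.sum_div,
      Finset.sum_product]
    refine Finset.sum_congr rfl fun k _ => ?_
    simp only [Fintype.sum_bool, c, n, map_mul, ← Complex.exp_conj, Complex.conj_I,
      Complex.conj_ofReal, Complex.conj_natCast]
    simp
    ring
  have hq : ∀ t : ℝ, (((fun s : ℝ => p s ^ 2) t : ℝ) : ℂ) = ∑ x ∈ S ×ˢ S,
      (c x.1 * c x.2) * Complex.exp ((Complex.I * ((n x.1 + n x.2 : ℤ) : ℂ) * ω) * t) := by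
    intro t
    simp only [Complex.ofReal_pow]
    rw [hpS, sq, Finset.sum_mul_sum, Finset.sum_product S S]
    refine Finset.sum_congr rfl fun x _ => Finset.sum_congr rfl fun y _ => ?_
    rw [mul_mul_mul_comm, ← Complex.exp_add]
    congr 2
    push_cast; ring
  rw [aux_main T hT ω hω (S ×ˢ S) (fun x => c x.1 * c x.2) (fun x => n x.1 + n x.2) _ hq m]
  have key : ∑ x ∈ S ×ˢ S, (if n x.1 + n x.2 = (m : ℤ) then c x.1 * c x.2 else 0)
      = ((∑ j ∈ range (N + 1), ∑ k ∈ range (N + 1), (if j + k = m then a j * a k else 0))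
        + (∑ j ∈ range (N + 1), ∑ k ∈ range (N + 1),
            (if k = j + m then (starRingEnd ℂ) (a j) * a k else 0))
        + (∑ k ∈ range (N + 1), ∑ j ∈ range (N + 1),
            (if k = j + m then (starRingEnd ℂ) (a j) * a k else 0))) / 4 := by
    rw [Finset.sum_product S S]
    simp only [S, Finset.sum_product, Fintype.sum_bool]
    simp only [← Finset.sum_add_distrib, Finset.sum_div]
    refine Finset.sum_congr rfl fun j _ => ?_
    refine Finset.sum_congr rfl fun k _ => ?_
    simp only [c, n, if_true, Bool.false_eq_true, if_false]
    have e1 : ((j : ℤ) + k = m) ↔ j + k = m := by omega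
    have e2 : ((j : ℤ) + -k = m) ↔ j = k + m := by omega
    have e3 : (-(j : ℤ) + k = m) ↔ k = j + m := by omega
    have e4 : ¬ (-(j : ℤ) + -k = m) := by omega
    simp only [e1, e2, e3, e4, if_false]
    split_ifs <;> ring
  rw [key, Finset.sum_comm (f := fun k j => if k = j + m then (starRingEnd ℂ) (a j) * a k else 0),
    aux_conv N m hmN a ha0, aux_corr N m hmN a]
  ring
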